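/- arXiv:2010.00546 — 2 statements merged into one kernel-verified Lean document; each statement's English description precedes it below -/
import Mathlib

section
/- Let α, μ ∈ (0,1] and λ₀ > 0. For every x > 0 the derivative of the Prabhakar function satisfies d/dx [E^μ_{α,1}(−λ₀ x^α)] = −λ₀ x^{α−1} Σ_{s=0}^∞ ((μ)_{s+1}/(s+1)!) (−λ₀ x^α)^s / Γ(αs + α), and the resulting transition density kernel W^{(μ)}_α(x) = −d/dx [E^μ_{α,1}(−λ₀ x^α)] is normalized: ∫_0^∞ W^{(μ)}_α(x) dx = 1. -/
open MeasureTheory Polynomial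

/-- Prabhakar (three-parameter Mittag-Leffler) function
`E^γ_{a,b}(z) = Σ_{s=0}^∞ (γ)_s z^s / (s! Γ(a s + b))`. -/
noncomputable def prabhakar (a b γ z : ℝ) : ℝ :=
  ∑' s : ℕ, (ascPochhammer ℝ s).eval γ * z ^ s / ((s.factorial : ℝ) * Real.Gamma (a * s + b))

/-- The backward-signed difference `f m - f (m + 1)` of a sequence. -/
def negDiff (f : ℕ → ℝ) : ℕ → ℝ := fun m => f m - f (m + 1)

/-- `CMOrder n f`: the iterated differences of `f` with alternating signs are nonnegative
up to order `n`, i.e. `f` is completely monotone up to order `n`. -/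
def CMOrder : ℕ → (ℕ → ℝ) → Prop
  | 0, f => ∀ m, 0 ≤ f m
  | n + 1, f => (∀ m, 0 ≤ f m) ∧ CMOrder n (negDiff f)

/-- A positive sequence whose increments are completely monotone. -/
def IsBernsteinSeq (b : ℕ → ℝ) : Prop :=
  (∀ m, 0 < b m) ∧ ∀ n, CMOrder n (fun m => b (m + 1) - b m)

namespace CMOrder

lemma nonneg {n : ℕ} {f : ℕ → ℝ} (h : CMOrder n f) (m : ℕ) : 0 ≤ f m := by
  cases n with
  | zero => exact h m
  | succ n => exact h.1 m

lemma of_succ {n : ℕ} {f : ℕ → ℝ} (h : CMOrder (n + 1) f) : CMOrder n f := by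
  induction n generalizing f with
  | zero => exact h.1
  | succ n ih => exact ⟨h.1, ih h.2⟩

lemma zero_seq (n : ℕ) : CMOrder n (fun _ => 0) := by
  induction n with
  | zero => exact fun _ => le_rfl
  | succ n ih =>
    refine ⟨fun _ => le_rfl, ?_⟩
    have : negDiff (fun _ => 0) = fun _ => 0 := by ext; simp [negDiff]
    rwa [this]

lemma const {c : ℝ} (hc : 0 ≤ c) (n : ℕ) : CMOrder n (fun _ => c) := by
  cases n with
  | zero => exact fun _ => hc
  | succ n =>
    refine ⟨fun _ => hc, ?_⟩
    have : negDiff (fun _ => c) = fun _ => 0 := by ext; simp [negDiff]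
    rw [this]
    exact zero_seq n

lemma shift {n : ℕ} {f : ℕ → ℝ} (h : CMOrder n f) : CMOrder n (fun m => f (m + 1)) := by
  induction n generalizing f with
  | zero => exact fun m => h (m + 1)
  | succ n ih => exact ⟨fun m => h.1 (m + 1), ih h.2⟩

lemma add {n : ℕ} {f g : ℕ → ℝ} (hf : CMOrder n f) (hg : CMOrder n g) :
    CMOrder n (fun m => f m + g m) := by
  induction n generalizing f g with
  | zero => exact fun m => add_nonneg (hf m) (hg m)
  | succ n ih =>
    refine ⟨fun m => add_nonneg (hf.1 m) (hg.1 m), ?_⟩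
    convert ih hf.2 hg.2 using 1
    ext m
    simp only [negDiff]
    ring

lemma mul {n : ℕ} {f g : ℕ → ℝ} (hf : CMOrder n f) (hg : CMOrder n g) :
    CMOrder n (fun m => f m * g m) := by
  induction n generalizing f g with
  | zero => exact fun m => mul_nonneg (hf m) (hg m)
  | succ n ih =>
    refine ⟨fun m => mul_nonneg (hf.1 m) (hg.1 m), ?_⟩
    convert (ih hf.2 hg.of_succ.shift).add (ih hf.of_succ hg.2) using 1
    ext m
    simp only [negDiff]
    ring

lemma integral {X : Type*} [MeasurableSpace X] {ν : Measure X} {S : Set X}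
    (hS : MeasurableSet S) {n : ℕ} {F : X → ℕ → ℝ}
    (hF : ∀ t ∈ S, CMOrder n (F t)) (hi : ∀ m, IntegrableOn (fun t => F t m) S ν) :
    CMOrder n (fun m => ∫ t in S, F t m ∂ν) := by
  induction n generalizing F with
  | zero => exact fun m => setIntegral_nonneg hS fun t ht => hF t ht m
  | succ n ih =>
    refine ⟨fun m => setIntegral_nonneg hS fun t ht => (hF t ht).1 m, ?_⟩
    convert ih (F := fun t => negDiff (F t)) (fun t ht => (hF t ht).2)
      (fun m => (hi m).sub (hi (m + 1))) using 1
    ext m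
    exact (integral_sub (hi m) (hi (m + 1))).symm

end CMOrder

namespace IsBernsteinSeq

lemma add_const {b : ℕ → ℝ} (hb : IsBernsteinSeq b) {c : ℝ} (hc : 0 ≤ c) :
    IsBernsteinSeq (fun m => c + b m) :=
  ⟨fun m => add_pos_of_nonneg_of_pos hc (hb.1 m), fun n => by simpa using hb.2 n⟩

lemma inv {b : ℕ → ℝ} (hb : IsBernsteinSeq b) (n : ℕ) : CMOrder n (fun m => (b m)⁻¹) := by
  induction n with
  | zero => exact fun m => (inv_pos.2 (hb.1 m)).le
  | succ n ih =>
    refine ⟨fun m => (inv_pos.2 (hb.1 m)).le, ?_⟩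
    convert ((hb.2 n).mul ih).mul ih.shift using 1
    ext m
    have h₀ := (hb.1 m).ne'
    have h₁ := (hb.1 (m + 1)).ne'
    simp only [negDiff]
    field_simp

lemma rpow {b : ℕ → ℝ} (hb : IsBernsteinSeq b) {p : ℝ} (hp : p ∈ Set.Icc (0 : ℝ) 1) :
    IsBernsteinSeq (fun m => b m ^ p) := by
  refine ⟨fun m => Real.rpow_pos_of_pos (hb.1 m) p, fun n => ?_⟩
  rcases hp.1.eq_or_lt with rfl | h0
  · simpa using CMOrder.zero_seq n
  rcases hp.2.eq_or_lt with rfl | h1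
  · simpa using hb.2 n
  obtain ⟨ν, hν⟩ := Real.exists_measure_rpow_eq_integral_rpowIntegrand₀₁ (p := p) ⟨h0, h1⟩
  have hi := fun m => (hν (b m) (hb.1 m).le).1
  convert CMOrder.integral (ν := ν) measurableSet_Ioi (n := n)
    (F := fun t m => Real.rpowIntegrand₀₁ p t (b (m + 1)) - Real.rpowIntegrand₀₁ p t (b m))
    (S := Set.Ioi (0 : ℝ)) (fun t ht => ?_) (fun m => (hi (m + 1)).sub (hi m)) using 1
  · ext m
    rw [integral_sub (hi (m + 1)) (hi m), ← (hν _ (hb.1 (m + 1)).le).2, ← (hν _ (hb.1 m).le).2]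
  · convert (CMOrder.const (Real.rpow_nonneg (le_of_lt ht) p) n).mul
      ((hb.add_const (le_of_lt ht)).inv (n + 1)).2 using 1
    ext m
    simp only [negDiff, Real.rpowIntegrand₀₁]
    ring

end IsBernsteinSeq

lemma isBernsteinSeq_add_natCast {c : ℝ} (hc : 0 < c) : IsBernsteinSeq (fun m => c + m) :=
  ⟨fun m => by positivity, fun n => by simpa using CMOrder.const zero_le_one n⟩

/-- The Laplace symbol of the transition density is completely monotone. -/
lemma cmOrder_one_sub_rpow {α μ l c : ℝ} (hα : α ∈ Set.Icc (0 : ℝ) 1) (hμ : μ ∈ Set.Icc (0 : ℝ) 1)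
    (hl : 0 < l) (hc : 0 < c) (n : ℕ) :
    CMOrder n (fun m : ℕ => 1 - (1 + l * (c + m) ^ (-α)) ^ (-μ)) := by
  have hb := (isBernsteinSeq_add_natCast hc).rpow hα
  have hinv := (hb.add_const hl.le).inv
  have hpos : ∀ m : ℕ, 0 < (c + m : ℝ) ^ α := hb.1
  have hu : IsBernsteinSeq (fun m : ℕ => (1 + l * (c + m : ℝ) ^ (-α))⁻¹) := by
    refine ⟨fun m => by positivity, fun n => ?_⟩
    convert (CMOrder.const hl.le n).mul (hinv (n + 1)).2 using 1
    ext m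
    have h0 := hpos m
    have h1 := hpos (m + 1)
    simp only [negDiff]
    rw [Real.rpow_neg (by positivity), Real.rpow_neg (by positivity)]
    have : 0 < l + (c + m : ℝ) ^ α := by positivity
    have : 0 < l + (c + (m + 1 : ℕ) : ℝ) ^ α := by positivity
    field_simp
    ring
  have key := hu.rpow hμ
  have hle : ∀ m : ℕ, ((1 + l * (c + m : ℝ) ^ (-α))⁻¹) ^ μ ≤ 1 := fun m =>
    Real.rpow_le_one (hu.1 m).le (inv_le_one_of_one_le₀ (by simp; positivity)) hμ.1
  have heq : (fun m : ℕ => 1 - (1 + l * (c + m : ℝ) ^ (-α)) ^ (-μ)) =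
      fun m : ℕ => 1 - ((1 + l * (c + m : ℝ) ^ (-α))⁻¹) ^ μ := by
    ext m
    rw [Real.rpow_neg (by positivity), Real.inv_rpow (by positivity)]
  rw [heq]
  cases n with
  | zero => exact fun m => sub_nonneg.2 (hle m)
  | succ n =>
    refine ⟨fun m => sub_nonneg.2 (hle m), ?_⟩
    convert key.2 n using 1
    ext m
    simp only [negDiff]
    ring

/-- The Laplace transform of the Prabhakar relaxation function is completely monotone. -/
lemma cmOrder_inv_mul_rpow {α μ l c : ℝ} (hα : α ∈ Set.Icc (0 : ℝ) 1) (hμ : μ ∈ Set.Icc (0 : ℝ) 1)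
    (hl : 0 < l) (hc : 0 < c) (n : ℕ) :
    CMOrder n (fun m : ℕ => (c + m)⁻¹ * (1 + l * (c + m) ^ (-α)) ^ (-μ)) := by
  have hb := isBernsteinSeq_add_natCast hc
  have h1 := ((hb.rpow (p := 1 - α * μ)
    ⟨by nlinarith [hα.1, hα.2, hμ.1, hμ.2], by nlinarith [hα.1, hα.2, hμ.1, hμ.2]⟩).inv n)
  have h2 := (((hb.rpow hα).add_const hl.le).rpow hμ).inv n
  convert h1.mul h2 using 1
  ext m
  have hx : 0 < c + (m : ℝ) := by positivity
  have hxa : 0 < (c + (m : ℝ)) ^ α := by positivity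
  have : 1 + l * (c + m : ℝ) ^ (-α) = (l + (c + m : ℝ) ^ α) / (c + m : ℝ) ^ α := by
    rw [Real.rpow_neg hx.le]
    field_simp
    ring
  rw [this, Real.rpow_neg (by positivity), Real.div_rpow (by positivity) hxa.le,
    ← Real.rpow_mul hx.le, Real.rpow_sub hx, Real.rpow_one]
  field_simp

lemma integral_exp_mul_one_sub_exp_nonneg {v : ℝ → ℝ} (hv : IntegrableOn v (Set.Ioi 0)) {n : ℕ}
    (h : CMOrder n (fun m => ∫ x in Set.Ioi (0 : ℝ), Real.exp (-x) ^ m * v x)) (m : ℕ) :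
    0 ≤ ∫ x in Set.Ioi (0 : ℝ), Real.exp (-x) ^ m * ((1 - Real.exp (-x)) ^ n * v x) := by
  have hInt : ∀ {u : ℝ → ℝ}, IntegrableOn u (Set.Ioi 0) → ∀ m : ℕ,
      IntegrableOn (fun x => Real.exp (-x) ^ m * u x) (Set.Ioi 0) := by
    intro u hu m
    refine hu.bdd_mul (c := 1) (by fun_prop) ?_
    refine (ae_restrict_iff' measurableSet_Ioi).2 (Filter.Eventually.of_forall fun x hx => ?_)
    have hx' : (0 : ℝ) < x := hx
    rw [norm_pow, Real.norm_eq_abs, Real.abs_exp]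
    exact pow_le_one₀ (Real.exp_pos _).le (Real.exp_le_one_iff.2 (by linarith))
  induction n generalizing v with
  | zero => simpa using h m
  | succ n ih =>
    have hv' : IntegrableOn (fun x => (1 - Real.exp (-x)) * v x) (Set.Ioi 0) := by
      refine (hv.sub (hInt hv 1)).congr (Filter.Eventually.of_forall fun x => ?_)
      simp only [Pi.sub_apply]
      ring
    have := ih hv' (by
      convert h.2 using 1
      ext k
      simp only [negDiff]
      rw [← integral_sub (hInt hv k) (hInt hv (k + 1))]
      congr 1
      ext x
      ring)
    convert this using 3
    ring

lemma nonneg_of_cmOrder_laplace {v : ℝ → ℝ} (hv : IntegrableOn v (Set.Ioi 0))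
    (hc : ContinuousOn v (Set.Ioi 0))
    (h : ∀ n, CMOrder n (fun m => ∫ x in Set.Ioi (0 : ℝ), Real.exp (-x) ^ m * v x))
    {x : ℝ} (hx : 0 < x) : 0 ≤ v x := by
  have hmem : ∀ y : ℝ, max 0 (min 1 (Real.exp (-y))) ∈ Set.Icc (0 : ℝ) 1 :=
    fun y => ⟨le_max_left _ _, max_le zero_le_one (min_le_left _ _)⟩
  let e : ℝ → unitInterval := fun y => ⟨_, hmem y⟩
  have hecont : Continuous e := by
    apply Continuous.subtype_mk
    fun_prop
  have he : ∀ y ∈ Set.Ioi (0 : ℝ), (e y : ℝ) = Real.exp (-y) := by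
    intro y hy
    have hy' : (0 : ℝ) < y := hy
    change max 0 (min 1 (Real.exp (-y))) = _
    rw [min_eq_right (Real.exp_le_one_iff.2 (by linarith)), max_eq_right (Real.exp_pos _).le]
  have hInt : ∀ q : C(unitInterval, ℝ), IntegrableOn (fun y => q (e y) * v y) (Set.Ioi 0) := by
    intro q
    refine hv.bdd_mul (c := ‖q‖) (q.continuous.comp hecont).aestronglyMeasurable ?_
    exact Filter.Eventually.of_forall fun y => q.norm_coe_le_norm _
  have hbern : ∀ (q : C(unitInterval, ℝ)), (∀ u, 0 ≤ q u) → ∀ n : ℕ,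
      0 ≤ ∫ y in Set.Ioi (0 : ℝ), bernsteinApproximation n q (e y) * v y := by
    intro q hq n
    simp only [bernsteinApproximation.apply, Finset.sum_mul, smul_eq_mul]
    rw [integral_finsetSum]
    · refine Finset.sum_nonneg fun k _ => ?_
      have := integral_exp_mul_one_sub_exp_nonneg hv (h (n - k)) k
      have h2 := mul_nonneg (mul_nonneg (hq (bernstein.z k)) (Nat.cast_nonneg (n.choose k))) this
      rw [← integral_const_mul] at h2
      refine h2.trans_eq (setIntegral_congr_fun measurableSet_Ioi fun y hy => ?_)
      simp only [bernstein_apply, he y hy]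
      ring
    · intro k _
      have := (hInt (bernstein n k)).const_mul (q (bernstein.z k))
      refine this.congr (Filter.Eventually.of_forall fun y => ?_)
      simp only
      ring
  have hlim : ∀ (q : C(unitInterval, ℝ)), (∀ u, 0 ≤ q u) →
      0 ≤ ∫ y in Set.Ioi (0 : ℝ), q (e y) * v y := by
    intro q hq
    have ht := bernsteinApproximation_uniform q
    have hn := (continuous_norm.tendsto _).comp ht
    refine ge_of_tendsto' (tendsto_integral_filter_of_dominated_convergence
      (l := Filter.atTop)
      (F := fun n y => bernsteinApproximation n q (e y) * v y)
      (fun y => (‖q‖ + 1) * ‖v y‖) ?_ ?_ (hv.norm.const_mul _) ?_) (hbern q hq)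
    · exact Filter.Eventually.of_forall fun n => (hInt _).aestronglyMeasurable
    · filter_upwards [hn.eventually_le_const (lt_add_one ‖q‖)] with n hn
      refine Filter.Eventually.of_forall fun y => ?_
      rw [norm_mul]
      gcongr
      exact (ContinuousMap.norm_coe_le_norm _ _).trans hn
    · refine Filter.Eventually.of_forall fun y => ?_
      exact (((continuous_eval_const (e y)).tendsto q).comp ht).mul_const _
  by_contra! hneg
  have hU : {y | 0 < y ∧ v y < 0} ∈ nhds x := by
    filter_upwards [Ioi_mem_nhds hx, (hc.continuousAt (Ioi_mem_nhds hx)).eventually_lt_const hneg]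
      with y h1 h2 using ⟨h1, h2⟩
  obtain ⟨δ, hδ, hball⟩ : ∃ δ > 0, ∀ y : ℝ,
      |Real.exp (-y) - Real.exp (-x)| < δ → v y < 0 := by
    have hlog : ContinuousAt (fun u => -Real.log u) (Real.exp (-x)) :=
      (Real.continuousAt_log (Real.exp_pos _).ne').neg
    have : {u | v (-Real.log u) < 0} ∈ nhds (Real.exp (-x)) := by
      refine hlog.eventually (p := fun y => v y < 0) ?_
      simp only [Real.log_exp, neg_neg]
      filter_upwards [hU] with y hy using hy.2
    obtain ⟨δ, hδ, hs⟩ := Metric.mem_nhds_iff.1 this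
    refine ⟨δ, hδ, fun y hyd => ?_⟩
    have := hs (show Real.exp (-y) ∈ Metric.ball (Real.exp (-x)) δ from hyd)
    simpa using this
  let q : C(unitInterval, ℝ) := ⟨fun u => max 0 (δ - |(u : ℝ) - Real.exp (-x)|), by fun_prop⟩
  have hq0 : ∀ u, 0 ≤ q u := fun u => le_max_left _ _
  have hsign : ∀ y ∈ Set.Ioi (0 : ℝ), 0 ≤ -(q (e y) * v y) := by
    intro y hy
    rcases le_or_gt (δ - |(e y : ℝ) - Real.exp (-x)|) 0 with h1 | h1
    · have : q (e y) = 0 := max_eq_left h1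
      simp [this]
    · rw [he y hy] at h1
      nlinarith [hball y (by linarith), hq0 (e y)]
  have hcont : ContinuousOn (fun y => -(q (e y) * v y)) (Set.Ioi 0) :=
    ((q.continuous.comp hecont).continuousOn.mul hc).neg
  have hposx : 0 < -(q (e x) * v x) := by
    have : q (e x) = max 0 (δ - |(e x : ℝ) - Real.exp (-x)|) := rfl
    rw [he x hx] at this
    simp only [sub_self, abs_zero, sub_zero, max_eq_right hδ.le] at this
    rw [this]
    nlinarith
  have hpos : 0 < ∫ y in Set.Ioi (0 : ℝ), -(q (e y) * v y) := by
    rw [setIntegral_pos_iff_support_of_nonneg_ae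
      ((ae_restrict_iff' measurableSet_Ioi).2 (Filter.Eventually.of_forall hsign)) (hInt q).neg]
    refine Measure.measure_pos_of_mem_nhds _ (x := x) ?_
    filter_upwards [Ioi_mem_nhds hx,
      (hcont.continuousAt (Ioi_mem_nhds hx)).eventually_const_lt hposx] with y h1 h2
      using ⟨h2.ne', h1⟩
  rw [integral_neg] at hpos
  linarith [hlim q hq0]

lemma rpow_mul_exp_neg_le_Gamma {R y : ℝ} (hR : 0 < R) (hy : 0 ≤ y) :
    R ^ y * Real.exp (-R) ≤ Real.Gamma (y + 1) := by
  have hi := Real.GammaIntegral_convergent (s := y + 1) (by linarith)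
  have hsub : Set.Ioi R ⊆ Set.Ioi 0 := Set.Ioi_subset_Ioi hR.le
  rw [Real.Gamma_eq_integral (by linarith), ← integral_exp_neg_Ioi, ← integral_const_mul]
  refine (setIntegral_mono_on ((integrableOn_exp_neg_Ioi R).const_mul _) (hi.mono_set hsub)
    measurableSet_Ioi fun x hx => ?_).trans
    (setIntegral_mono_set hi ?_ hsub.eventuallyLE)
  · rw [add_sub_cancel_right, mul_comm]
    gcongr
    exact le_of_lt hx
  · refine (ae_restrict_iff' measurableSet_Ioi).2 (Filter.Eventually.of_forall fun x hx => ?_)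
    have hx' : (0 : ℝ) < x := hx
    simp only [Pi.zero_apply]
    positivity

/-- The coefficients of an everywhere absolutely convergent power series. -/
def EntireCoeff (c : ℕ → ℝ) : Prop := ∀ r : ℝ, 0 ≤ r → Summable fun s => |c s| * r ^ s

lemma EntireCoeff.derivative {c : ℕ → ℝ} (hc : EntireCoeff c) :
    EntireCoeff fun s => ((s : ℝ) + 1) * c (s + 1) := by
  intro r hr
  refine Summable.of_nonneg_of_le (fun s => by positivity) (fun s => ?_)
    ((summable_nat_add_iff 1).2 (hc (2 * (r + 1)) (by positivity)))
  rw [abs_mul, abs_of_nonneg (by positivity : (0 : ℝ) ≤ s + 1), mul_comm ((s : ℝ) + 1), mul_assoc,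
    mul_pow]
  have h1 : (s : ℝ) + 1 ≤ 2 ^ (s + 1) := by exact_mod_cast (s + 1).lt_two_pow_self.le
  have h2 : r ^ s ≤ (r + 1) ^ (s + 1) := calc
    r ^ s ≤ (r + 1) ^ s := by gcongr; linarith
    _ ≤ (r + 1) ^ (s + 1) := pow_le_pow_right₀ (by linarith) (Nat.le_succ s)
  gcongr

lemma EntireCoeff.hasDerivAt {c : ℕ → ℝ} (hc : EntireCoeff c) (z : ℝ) :
    HasDerivAt (fun y => ∑' s, c s * y ^ s) (∑' s : ℕ, ((s : ℝ) + 1) * c (s + 1) * z ^ s) z := by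
  set r := |z| + 1 with hr
  have hr0 : 0 < r := by positivity
  have hsum : Summable fun s : ℕ => |c s| * (s * r ^ (s - 1)) := by
    refine (summable_nat_add_iff 1).1 ((hc.derivative r hr0.le).congr fun s => ?_)
    rw [abs_mul, abs_of_nonneg (by positivity : (0 : ℝ) ≤ s + 1)]
    rw [Nat.add_sub_cancel, Nat.cast_succ]
    ring
  have hbd : ∀ (s : ℕ) (y : ℝ), y ∈ Metric.ball (0 : ℝ) r →
      ‖c s * (s * y ^ (s - 1))‖ ≤ |c s| * (s * r ^ (s - 1)) := by
    intro s y hy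
    have hy' : |y| < r := by simpa using hy
    rw [norm_mul, norm_mul, norm_pow, Real.norm_eq_abs, Real.norm_eq_abs, Real.norm_eq_abs,
      Nat.abs_cast]
    gcongr
  have hz : z ∈ Metric.ball (0 : ℝ) r := by simp [hr]
  have h := hasDerivAt_tsum_of_isPreconnected (g := fun s y => c s * y ^ s)
    (g' := fun s y => c s * (s * y ^ (s - 1))) hsum Metric.isOpen_ball
    (convex_ball (0 : ℝ) r).isPreconnected (fun s y _ => (hasDerivAt_pow s y).const_mul (c s)) hbd
    (Metric.mem_ball_self hr0)
    (summable_of_ne_finset_zero (s := {0}) fun s hs => by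
      have : s ≠ 0 := by simpa using hs
      simp [this]) hz
  refine h.congr_deriv ?_
  rw [(Summable.of_norm_bounded hsum fun s => hbd s z hz).tsum_eq_zero_add]
  simp only [Nat.cast_zero, zero_mul, mul_zero, zero_add, Nat.add_sub_cancel, Nat.cast_add,
    Nat.cast_one]
  exact tsum_congr fun s => by ring

lemma EntireCoeff.continuous {c : ℕ → ℝ} (hc : EntireCoeff c) :
    Continuous fun y => ∑' s, c s * y ^ s :=
  continuous_iff_continuousAt.2 fun z => (hc.hasDerivAt z).continuousAt

lemma laplace_tsum_rpow {a e : ℕ → ℝ} (he : ∀ s, 0 < e s) {p : ℝ} (hp : 0 < p) {h : ℝ → ℝ}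
    (hh : ∀ x, 0 < x → h x = ∑' s, a s * x ^ (e s - 1) / Real.Gamma (e s))
    (hc : ContinuousOn h (Set.Ioi 0)) (hs : Summable fun s => |a s| * (1 / p) ^ e s) :
    IntegrableOn (fun x => Real.exp (-(p * x)) * h x) (Set.Ioi 0) ∧
      HasSum (fun s => a s * (1 / p) ^ e s)
        (∫ x in Set.Ioi (0 : ℝ), Real.exp (-(p * x)) * h x) := by
  let F : ℕ → ℝ → ℝ := fun s x =>
    a s / Real.Gamma (e s) * (x ^ (e s - 1) * Real.exp (-(p * x)))
  have hG : ∀ s, 0 < Real.Gamma (e s) := fun s => Real.Gamma_pos_of_pos (he s)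
  have hF : ∀ s, Integrable (F s) (volume.restrict (Set.Ioi 0)) := fun s => by
    refine Integrable.const_mul ?_ _
    refine .of_integral_ne_zero ?_
    rw [Real.integral_rpow_mul_exp_neg_mul_Ioi (he s) hp]
    have := hG s
    positivity
  have hFi : ∀ s, ∫ x in Set.Ioi (0 : ℝ), F s x = a s * (1 / p) ^ e s := fun s => by
    simp only [F]
    rw [integral_const_mul, Real.integral_rpow_mul_exp_neg_mul_Ioi (he s) hp]
    have := (hG s).ne'
    field_simp
  have hFn : ∀ s, ∫ x in Set.Ioi (0 : ℝ), ‖F s x‖ = |a s| * (1 / p) ^ e s := fun s => by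
    have : ∫ x in Set.Ioi (0 : ℝ), ‖F s x‖ = ∫ x in Set.Ioi (0 : ℝ),
        |a s| / Real.Gamma (e s) * (x ^ (e s - 1) * Real.exp (-(p * x))) := by
      refine setIntegral_congr_fun measurableSet_Ioi fun x hx => ?_
      have hx' : (0 : ℝ) < x := hx
      simp only [F]
      rw [norm_mul, norm_div, Real.norm_of_nonneg (hG s).le,
        Real.norm_of_nonneg (by positivity : 0 ≤ x ^ (e s - 1) * Real.exp (-(p * x))),
        Real.norm_eq_abs]
    rw [this, integral_const_mul, Real.integral_rpow_mul_exp_neg_mul_Ioi (he s) hp]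
    have := (hG s).ne'
    field_simp
  have hFs : ∀ x ∈ Set.Ioi (0 : ℝ), ∑' s, F s x = Real.exp (-(p * x)) * h x := by
    intro x hx
    rw [hh x hx, ← tsum_mul_left]
    exact tsum_congr fun s => by simp only [F]; ring
  have hsum : Summable fun s => ∫ x in Set.Ioi (0 : ℝ), ‖F s x‖ := by simpa only [hFn] using hs
  constructor
  · refine ⟨(ContinuousOn.mul (by fun_prop) hc).aestronglyMeasurable measurableSet_Ioi, ?_⟩
    rw [hasFiniteIntegral_iff_enorm]
    calc ∫⁻ x in Set.Ioi (0 : ℝ), ‖Real.exp (-(p * x)) * h x‖ₑ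
        ≤ ∫⁻ x in Set.Ioi (0 : ℝ), ∑' s, ‖F s x‖ₑ := by
          refine setLIntegral_mono' measurableSet_Ioi fun x hx => ?_
          rw [← hFs x hx]
          exact enorm_tsum_le_tsum_enorm
      _ = ∑' s, ∫⁻ x in Set.Ioi (0 : ℝ), ‖F s x‖ₑ :=
          lintegral_tsum fun s => (hF s).aestronglyMeasurable.enorm
      _ = ∑' s, ENNReal.ofReal (|a s| * (1 / p) ^ e s) :=
          tsum_congr fun s => by rw [← hFn, ofReal_integral_norm_eq_lintegral_enorm (hF s)]
      _ < ⊤ := hs.tsum_ofReal_lt_top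
  · have := hasSum_integral_of_summable_integral_norm hF hsum
    simp only [hFi] at this
    rwa [setIntegral_congr_fun measurableSet_Ioi hFs] at this

lemma hasSum_ascPochhammer_div_factorial (μ : ℝ) {z : ℝ} (hz : |z| < 1) :
    HasSum (fun s : ℕ => (ascPochhammer ℝ s).eval μ / s.factorial * z ^ s) ((1 - z) ^ (-μ)) := by
  have h := (Real.one_add_rpow_hasFPowerSeriesOnBall_zero (a := -μ)).hasSum (y := -z)
    (by simpa [enorm_eq_nnnorm, ← NNReal.coe_lt_coe] using hz)
  rw [zero_add, ← sub_eq_add_neg] at h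
  refine h.congr_fun fun s => ?_
  rw [binomialSeries_apply, Ring.choose_neg']
  have h1 : Ring.multichoose μ s = (ascPochhammer ℝ s).eval μ / s.factorial := by
    rw [eq_div_iff (by positivity), mul_comm, ← nsmul_eq_mul,
      Ring.factorial_nsmul_multichoose_eq_ascPochhammer, ascPochhammer_smeval_eq_eval]
  rw [h1, List.ofFn_const, List.prod_replicate, neg_pow z, smul_eq_mul]
  rcases Nat.even_or_odd s with hs | hs <;> simp [hs.neg_one_pow, Int.negOnePow_def, Units.smul_def]

lemma ascPochhammer_div_factorial_mem_Icc {μ : ℝ} (hμ : μ ∈ Set.Ioc (0 : ℝ) 1) (s : ℕ) :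
    (ascPochhammer ℝ s).eval μ / s.factorial ∈ Set.Icc (0 : ℝ) 1 := by
  have hpos : ∀ s, 0 < (ascPochhammer ℝ s).eval μ := fun s => ascPochhammer_pos s μ hμ.1
  refine ⟨div_nonneg (hpos s).le (by positivity), ?_⟩
  rw [div_le_one (by positivity)]
  induction s with
  | zero => simp
  | succ s ih =>
    rw [ascPochhammer_succ_eval, Nat.factorial_succ, mul_comm]
    push_cast
    have := hpos s
    exact mul_le_mul (by linarith [hμ.2]) ih this.le (by positivity)

lemma entireCoeff_prabhakar {α μ : ℝ} (hα : 0 < α) (hμ : μ ∈ Set.Ioc (0 : ℝ) 1) :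
    EntireCoeff fun s : ℕ =>
      (ascPochhammer ℝ s).eval μ / s.factorial / Real.Gamma (α * s + 1) := by
  intro r hr
  set R : ℝ := (2 * (r + 1)) ^ (1 / α) with hRdef
  have hR : 0 < R := by positivity
  have hRα : ∀ s : ℕ, R ^ (α * s) = (2 * (r + 1)) ^ s := fun s => by
    rw [hRdef, ← Real.rpow_mul (by positivity), ← mul_assoc, one_div_mul_cancel hα.ne', one_mul,
      Real.rpow_natCast]
  refine Summable.of_nonneg_of_le (fun s => by positivity) (fun s => ?_)
    ((summable_geometric_of_lt_one (by norm_num) (by norm_num : (1 / 2 : ℝ) < 1)).mul_left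
      (Real.exp R))
  obtain ⟨h0, h1⟩ := ascPochhammer_div_factorial_mem_Icc hμ s
  have hG := rpow_mul_exp_neg_le_Gamma hR (by positivity : 0 ≤ α * s)
  rw [hRα s] at hG
  have hpos : 0 < (2 * (r + 1)) ^ s * Real.exp (-R) := by positivity
  rw [abs_of_nonneg (div_nonneg h0 (hpos.trans_le hG).le)]
  calc _ ≤ 1 / ((2 * (r + 1)) ^ s * Real.exp (-R)) * (r + 1) ^ s := by
        gcongr
        linarith
    _ = Real.exp R * (1 / 2) ^ s := by
        rw [Real.exp_neg, mul_pow, one_div_pow]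
        field_simp

/-- The transition density kernel `W^{(μ)}_α` in series form. -/
noncomputable def prabhakarKernel (α μ l x : ℝ) : ℝ :=
  l * x ^ (α - 1) * ∑' s : ℕ, ((ascPochhammer ℝ (s + 1)).eval μ / (((s + 1).factorial : ℝ))) *
    (-(l * x ^ α)) ^ s / Real.Gamma (α * s + α)

lemma prabhakar_eq_tsum (α μ z : ℝ) : prabhakar α 1 μ z = ∑' s : ℕ,
    (ascPochhammer ℝ s).eval μ / s.factorial / Real.Gamma (α * s + 1) * z ^ s :=
  tsum_congr fun s => by rw [div_div, div_mul_eq_mul_div]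

lemma prabhakarKernel_eq {α : ℝ} (hα : 0 < α) (μ l x : ℝ) :
    prabhakarKernel α μ l x = l * x ^ (α - 1) * (α * ∑' s : ℕ, ((s : ℝ) + 1) *
      ((ascPochhammer ℝ (s + 1)).eval μ / (s + 1).factorial / Real.Gamma (α * (s + 1 : ℕ) + 1)) *
        (-(l * x ^ α)) ^ s) := by
  rw [prabhakarKernel, ← tsum_mul_left (a := α)]
  congr 1
  refine tsum_congr fun s => ?_
  have h : α * ((s + 1 : ℕ) : ℝ) = α * s + α := by push_cast; ring
  have hpos : 0 < α * s + α := by positivity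
  rw [h, Real.Gamma_add_one hpos.ne']
  have hG := (Real.Gamma_pos_of_pos hpos).ne'
  have hs : (s : ℝ) + 1 ≠ 0 := by positivity
  rw [show α * s + α = α * (s + 1) by ring] at hG ⊢
  field_simp

lemma hasDerivAt_prabhakar {α μ : ℝ} (hα : 0 < α) (hμ : μ ∈ Set.Ioc (0 : ℝ) 1) (l : ℝ)
    {x : ℝ} (hx : 0 < x) :
    HasDerivAt (fun y : ℝ => prabhakar α 1 μ (-(l * y ^ α))) (-prabhakarKernel α μ l x) x := by
  have h1 := (entireCoeff_prabhakar hα hμ).hasDerivAt (-(l * x ^ α))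
  have h2 := ((Real.hasDerivAt_rpow_const (p := α) (Or.inl hx.ne')).const_mul l).neg
  simp only [prabhakar_eq_tsum]
  refine (HasDerivAt.comp x h1 h2).congr_deriv ?_
  rw [prabhakarKernel_eq hα]
  ring

lemma continuous_prabhakar_rpow {α μ : ℝ} (hα : 0 < α) (hμ : μ ∈ Set.Ioc (0 : ℝ) 1) (l : ℝ) :
    Continuous fun y : ℝ => prabhakar α 1 μ (-(l * y ^ α)) := by
  simp only [prabhakar_eq_tsum]
  exact (entireCoeff_prabhakar hα hμ).continuous.comp
    ((Real.continuous_rpow_const hα.le).const_mul l).neg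

lemma continuousOn_prabhakarKernel {α μ : ℝ} (hα : 0 < α) (hμ : μ ∈ Set.Ioc (0 : ℝ) 1) (l : ℝ) :
    ContinuousOn (prabhakarKernel α μ l) (Set.Ioi 0) := by
  have hpow : ∀ β : ℝ, ContinuousOn (fun x : ℝ => x ^ β) (Set.Ioi 0) := fun β x hx =>
    (Real.continuousAt_rpow_const x β (Or.inl (ne_of_gt hx))).continuousWithinAt
  have h := (entireCoeff_prabhakar hα hμ).derivative.continuous.comp_continuousOn
    ((hpow α).const_mul l).neg
  refine (((hpow (α - 1)).const_mul l).mul (h.const_mul α)).congr fun x _ => ?_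
  exact prabhakarKernel_eq hα μ l x

lemma one_div_rpow_mul_natCast {p : ℝ} (hp : 0 < p) (α : ℝ) (s : ℕ) :
    (1 / p) ^ (α * s) = (p ^ (-α)) ^ s := by
  rw [Real.rpow_mul (by positivity), Real.rpow_natCast, one_div, Real.inv_rpow hp.le,
    Real.rpow_neg hp.le]

lemma neg_mul_rpow_pow (l α : ℝ) {x : ℝ} (hx : 0 < x) (s : ℕ) :
    (-(l * x ^ α)) ^ s = (-l) ^ s * x ^ (α * s) := by
  rw [← neg_mul, mul_pow, Real.rpow_mul hx.le, Real.rpow_natCast]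

lemma summable_ascPochhammer_mul_pow (μ : ℝ) {q : ℝ} (hq0 : 0 ≤ q) (hq : q < 1) :
    Summable fun s : ℕ => (ascPochhammer ℝ s).eval μ / s.factorial * q ^ s :=
  (hasSum_ascPochhammer_div_factorial μ (by rwa [abs_of_nonneg hq0])).summable

lemma laplace_prabhakar {α μ l p : ℝ} (hα : 0 < α) (hμ : μ ∈ Set.Ioc (0 : ℝ) 1) (hl : 0 < l)
    (hp : 0 < p) (hlp : l * p ^ (-α) < 1) :
    IntegrableOn (fun x => Real.exp (-(p * x)) * prabhakar α 1 μ (-(l * x ^ α))) (Set.Ioi 0) ∧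
      ∫ x in Set.Ioi (0 : ℝ), Real.exp (-(p * x)) * prabhakar α 1 μ (-(l * x ^ α)) =
        p⁻¹ * (1 + l * p ^ (-α)) ^ (-μ) := by
  have hq0 : 0 ≤ l * p ^ (-α) := by positivity
  have hpow : ∀ s : ℕ, (1 / p) ^ (α * s + 1) = (p ^ (-α)) ^ s * p⁻¹ := fun s => by
    rw [Real.rpow_add (by positivity), one_div_rpow_mul_natCast hp, Real.rpow_one, one_div]
  obtain ⟨hi, hsum⟩ := laplace_tsum_rpow
    (a := fun s => (ascPochhammer ℝ s).eval μ / s.factorial * (-l) ^ s)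
    (e := fun s => α * s + 1) (fun s => by positivity) hp
    (h := fun x => prabhakar α 1 μ (-(l * x ^ α)))
    (fun x hx => by
      rw [prabhakar_eq_tsum]
      refine tsum_congr fun s => ?_
      rw [neg_mul_rpow_pow l α hx, add_sub_cancel_right]
      ring)
    (continuous_prabhakar_rpow hα hμ l).continuousOn
    (by
      refine ((summable_ascPochhammer_mul_pow μ hq0 hlp).mul_right p⁻¹).congr fun s => ?_
      rw [hpow, abs_mul, abs_pow, abs_neg, abs_of_pos hl,
        abs_of_nonneg (ascPochhammer_div_factorial_mem_Icc hμ s).1]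
      ring)
  refine ⟨hi, hsum.unique ?_⟩
  have := (hasSum_ascPochhammer_div_factorial μ (z := -(l * p ^ (-α)))
    (by rwa [abs_neg, abs_of_nonneg hq0])).mul_left p⁻¹
  rw [sub_neg_eq_add] at this
  refine this.congr_fun fun s => ?_
  rw [hpow]
  ring

lemma laplace_prabhakarKernel {α μ l p : ℝ} (hα : 0 < α) (hμ : μ ∈ Set.Ioc (0 : ℝ) 1)
    (hl : 0 < l) (hp : 0 < p) (hlp : l * p ^ (-α) < 1) :
    IntegrableOn (fun x => Real.exp (-(p * x)) * prabhakarKernel α μ l x) (Set.Ioi 0) ∧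
      ∫ x in Set.Ioi (0 : ℝ), Real.exp (-(p * x)) * prabhakarKernel α μ l x =
        1 - (1 + l * p ^ (-α)) ^ (-μ) := by
  have hq0 : 0 ≤ l * p ^ (-α) := by positivity
  have hpow : ∀ s : ℕ, (1 / p) ^ (α * s + α) = (p ^ (-α)) ^ (s + 1) := fun s => by
    rw [← one_div_rpow_mul_natCast hp, Nat.cast_succ]
    ring_nf
  obtain ⟨hi, hsum⟩ := laplace_tsum_rpow
    (a := fun s => -((ascPochhammer ℝ (s + 1)).eval μ / (s + 1).factorial * (-l) ^ (s + 1)))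
    (e := fun s => α * s + α) (fun s => by positivity) hp
    (h := prabhakarKernel α μ l)
    (fun x hx => by
      rw [prabhakarKernel, ← tsum_mul_left]
      refine tsum_congr fun s => ?_
      rw [neg_mul_rpow_pow l α hx, add_sub_assoc, Real.rpow_add hx]
      ring)
    (continuousOn_prabhakarKernel hα hμ l)
    (by
      refine ((summable_nat_add_iff 1).2 (summable_ascPochhammer_mul_pow μ hq0 hlp)).congr
        fun s => ?_
      rw [hpow, abs_neg, abs_mul, abs_pow, abs_neg, abs_of_pos hl,
        abs_of_nonneg (ascPochhammer_div_factorial_mem_Icc hμ (s + 1)).1]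
      ring)
  refine ⟨hi, hsum.unique ?_⟩
  have := ((hasSum_nat_add_iff' 1).2 (hasSum_ascPochhammer_div_factorial μ
    (z := -(l * p ^ (-α))) (by rwa [abs_neg, abs_of_nonneg hq0]))).neg
  simp only [Finset.range_one, Finset.sum_singleton, pow_zero, ascPochhammer_zero,
    eval_one, Nat.factorial_zero, Nat.cast_one, div_one, mul_one, neg_sub, sub_neg_eq_add] at this
  refine this.congr_fun fun s => ?_
  rw [hpow]
  ring

lemma nonneg_of_laplace_cmOrder {w φ : ℝ → ℝ} {c : ℝ} (hw : ContinuousOn w (Set.Ioi 0))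
    (hL : ∀ p, c ≤ p → IntegrableOn (fun x => Real.exp (-(p * x)) * w x) (Set.Ioi 0) ∧
      ∫ x in Set.Ioi (0 : ℝ), Real.exp (-(p * x)) * w x = φ p)
    (hφ : ∀ n, CMOrder n fun m => φ (c + m)) {x : ℝ} (hx : 0 < x) : 0 ≤ w x := by
  have h := nonneg_of_cmOrder_laplace (v := fun x => Real.exp (-(c * x)) * w x) (hL c le_rfl).1
    (ContinuousOn.mul (by fun_prop) hw) (fun n => by
      convert hφ n using 1
      ext m
      rw [← (hL (c + m) (by simp)).2]
      congr 1
      ext x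
      rw [← mul_assoc, ← Real.exp_nat_mul, ← Real.exp_add]
      ring_nf) hx
  exact nonneg_of_mul_nonneg_right h (Real.exp_pos _)

lemma exists_forall_mul_rpow_neg_lt_one {α : ℝ} (hα : 0 < α) (l : ℝ) :
    ∃ c > 0, ∀ p : ℝ, c ≤ p → l * p ^ (-α) < 1 := by
  have h := (tendsto_rpow_neg_atTop hα).const_mul l
  rw [mul_zero] at h
  obtain ⟨c, hc⟩ := Filter.eventually_atTop.1 (h.eventually_lt_const one_pos)
  exact ⟨max c 1, by positivity, fun p hp => hc p ((le_max_left _ _).trans hp)⟩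

lemma analyticAt_rpow_const {g : ℝ → ℝ} {x : ℝ} (hg : AnalyticAt ℝ g x) (hx : 0 < g x) {r : ℝ} :
    AnalyticAt ℝ (fun y => g y ^ r) x := by
  refine ((hg.log hx).mul (analyticAt_const (v := r))).rexp'.congr ?_
  filter_upwards [hg.continuousAt.eventually (lt_mem_nhds hx)] with y hy
  exact (Real.rpow_def_of_pos hy r).symm

lemma laplace_eqOn_of_le {W φ : ℝ → ℝ} (hW : IntegrableOn W (Set.Ioi 0))
    (hW0 : ∀ x, 0 < x → 0 ≤ W x) (hφ : AnalyticOnNhd ℝ φ (Set.Ioi 0)) {c : ℝ} (hc : 0 < c)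
    (h : ∀ p, c ≤ p → ∫ x in Set.Ioi (0 : ℝ), Real.exp (-(p * x)) * W x = φ p) {p : ℝ}
    (hp : 0 < p) : ∫ x in Set.Ioi (0 : ℝ), Real.exp (-(p * x)) * W x = φ p := by
  set ν : Measure ℝ := (volume.restrict (Set.Ioi 0)).withDensity fun x => ENNReal.ofReal (W x)
    with hν
  have hae : AEMeasurable (fun x => ENNReal.ofReal (W x)) (volume.restrict (Set.Ioi 0)) :=
    hW.aestronglyMeasurable.aemeasurable.ennreal_ofReal
  have hfin : ∀ᵐ x ∂(volume.restrict (Set.Ioi (0 : ℝ))), ENNReal.ofReal (W x) < ⊤ :=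
    Filter.Eventually.of_forall fun x => ENNReal.ofReal_lt_top
  have hmgf : ∀ t, ProbabilityTheory.mgf id ν t =
      ∫ x in Set.Ioi (0 : ℝ), Real.exp (t * x) * W x := by
    intro t
    rw [ProbabilityTheory.mgf, hν, integral_withDensity_eq_integral_toReal_smul₀ hae hfin]
    refine setIntegral_congr_fun measurableSet_Ioi fun x hx => ?_
    simp only [ENNReal.toReal_ofReal (hW0 x hx), smul_eq_mul, id]
    ring
  have hsub : Set.Iio (0 : ℝ) ⊆ ProbabilityTheory.integrableExpSet id ν := by
    intro t ht
    have ht' : t < 0 := ht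
    change Integrable _ ν
    rw [hν, integrable_withDensity_iff_integrable_smul₀' hae hfin]
    have : IntegrableOn (fun x => Real.exp (t * x) * W x) (Set.Ioi 0) := by
      refine Integrable.bdd_mul (c := 1) hW (by fun_prop) ?_
      refine (ae_restrict_iff' measurableSet_Ioi).2 (Filter.Eventually.of_forall fun x hx => ?_)
      rw [Real.norm_eq_abs, Real.abs_exp, Real.exp_le_one_iff]
      exact mul_nonpos_of_nonpos_of_nonneg ht'.le (le_of_lt hx)
    refine this.congr_fun (fun x hx => ?_) measurableSet_Ioi
    simp only [ENNReal.toReal_ofReal (hW0 x hx), smul_eq_mul, id]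
    ring
  have han : AnalyticOnNhd ℝ (fun p => ProbabilityTheory.mgf id ν (-p)) (Set.Ioi 0) := by
    intro p hp
    have hp' : (0 : ℝ) < p := hp
    refine AnalyticAt.fun_comp (f := fun p : ℝ => -p) ?_ (by fun_prop)
    exact ProbabilityTheory.analyticAt_mgf (interior_maximal hsub isOpen_Iio (by simpa using hp'))
  have hL : ∀ p, ProbabilityTheory.mgf id ν (-p) =
      ∫ x in Set.Ioi (0 : ℝ), Real.exp (-(p * x)) * W x := fun p => by
    rw [hmgf]
    simp only [neg_mul]
  rw [← hL p]
  refine han.eqOn_of_preconnected_of_eventuallyEq hφ isPreconnected_Ioi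
    (z₀ := c + 1) (by simp; linarith) ?_ hp
  filter_upwards [Ioi_mem_nhds (lt_add_one c)] with q hq
  rw [hL q, h q (le_of_lt hq)]

lemma exists_tendsto_atTop_of_antitoneOn {f : ℝ → ℝ} {b : ℝ} (hf : AntitoneOn f (Set.Ici 0))
    (hb : ∀ x, 0 < x → b ≤ f x) : ∃ L, b ≤ L ∧ Filter.Tendsto f Filter.atTop (nhds L) := by
  have hanti : Antitone fun x => f (max x 1) := fun x y hxy =>
    hf (by simp) (by simp) (max_le_max_right 1 hxy)
  have hlb : ∀ x, b ≤ f (max x 1) := fun x => hb _ (by positivity)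
  refine ⟨_, le_ciInf hlb, (tendsto_atTop_ciInf hanti ⟨b, ?_⟩).congr' ?_⟩
  · rintro _ ⟨x, rfl⟩
    exact hlb x
  · filter_upwards [Filter.eventually_ge_atTop 1] with x hx
    rw [max_eq_left hx]

lemma tendsto_one_sub_rpow_neg {α μ l : ℝ} (hα : 0 < α) (hμ : 0 < μ) (hl : 0 < l) :
    Filter.Tendsto (fun p : ℝ => 1 - (1 + l * p ^ (-α)) ^ (-μ)) (nhdsWithin 0 (Set.Ioi 0))
      (nhds 1) := by
  have h1 : Filter.Tendsto (fun p : ℝ => 1 + l * p ^ (-α)) (nhdsWithin 0 (Set.Ioi 0))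
      Filter.atTop :=
    Filter.tendsto_atTop_add_const_left _ _
      ((tendsto_rpow_neg_nhdsGT_zero (neg_neg_of_pos hα)).const_mul_atTop hl)
  simpa using ((tendsto_rpow_neg_atTop hμ).comp h1).const_sub 1

lemma integral_prabhakarKernel {α μ l : ℝ} (hα : α ∈ Set.Ioc (0 : ℝ) 1)
    (hμ : μ ∈ Set.Ioc (0 : ℝ) 1) (hl : 0 < l) :
    ∫ x in Set.Ioi (0 : ℝ), prabhakarKernel α μ l x = 1 := by
  have hα' : α ∈ Set.Icc (0 : ℝ) 1 := ⟨hα.1.le, hα.2⟩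
  have hμ' : μ ∈ Set.Icc (0 : ℝ) 1 := ⟨hμ.1.le, hμ.2⟩
  obtain ⟨c, hc, hlc⟩ := exists_forall_mul_rpow_neg_lt_one hα.1 l
  have hLW := fun p (hp : c ≤ p) =>
    laplace_prabhakarKernel hα.1 hμ hl (hc.trans_le hp) (hlc p hp)
  have hW0 : ∀ x, 0 < x → 0 ≤ prabhakarKernel α μ l x := fun x hx =>
    nonneg_of_laplace_cmOrder (continuousOn_prabhakarKernel hα.1 hμ l) hLW
      (cmOrder_one_sub_rpow hα' hμ' hl hc) hx
  set f : ℝ → ℝ := fun y => prabhakar α 1 μ (-(l * y ^ α)) with hf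
  have hfc : Continuous f := continuous_prabhakar_rpow hα.1 hμ l
  have hf0 : ∀ x, 0 < x → 0 ≤ f x := fun x hx =>
    nonneg_of_laplace_cmOrder hfc.continuousOn
      (fun p hp => laplace_prabhakar hα.1 hμ hl (hc.trans_le hp) (hlc p hp))
      (cmOrder_inv_mul_rpow hα' hμ' hl hc) hx
  have hderiv : ∀ x ∈ Set.Ioi (0 : ℝ), HasDerivAt f (-prabhakarKernel α μ l x) x :=
    fun x hx => hasDerivAt_prabhakar hα.1 hμ l hx
  have hanti : AntitoneOn f (Set.Ici 0) := by
    refine antitoneOn_of_hasDerivWithinAt_nonpos (convex_Ici 0) hfc.continuousOn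
      (f' := fun x => -prabhakarKernel α μ l x) ?_ ?_
    · simpa using fun x hx => (hderiv x hx).hasDerivWithinAt
    · simpa using hW0
  obtain ⟨L, hL0, hL⟩ := exists_tendsto_atTop_of_antitoneOn hanti hf0
  have hneg : ∀ x ∈ Set.Ioi (0 : ℝ), -prabhakarKernel α μ l x ≤ 0 :=
    fun x hx => neg_nonpos.2 (hW0 x hx)
  have hInt : IntegrableOn (prabhakarKernel α μ l) (Set.Ioi 0) := by
    simpa using (integrableOn_Ioi_deriv_of_nonpos hfc.continuousWithinAt hderiv hneg hL).neg
  have hval := integral_Ioi_of_hasDerivAt_of_nonpos hfc.continuousWithinAt hderiv hneg hL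
  have hf1 : f 0 = 1 := by
    rw [hf]
    simp only [prabhakar_eq_tsum, Real.zero_rpow hα.1.ne', mul_zero, neg_zero]
    rw [tsum_eq_single 0 fun s hs => by simp [hs]]
    simp
  rw [integral_neg, hf1] at hval
  refine le_antisymm (by linarith) ?_
  refine le_of_tendsto (tendsto_one_sub_rpow_neg hα.1 hμ.1 hl) ?_
  filter_upwards [self_mem_nhdsWithin] with p hp
  have hp' : (0 : ℝ) < p := hp
  have hφ : AnalyticOnNhd ℝ (fun p : ℝ => 1 - (1 + l * p ^ (-α)) ^ (-μ)) (Set.Ioi 0) := by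
    intro p hp
    have hp' : (0 : ℝ) < p := hp
    have h1 : AnalyticAt ℝ (fun p : ℝ => 1 + l * p ^ (-α)) p :=
      analyticAt_const.add (analyticAt_const.mul (analyticAt_rpow_const analyticAt_id hp'))
    exact analyticAt_const.sub (analyticAt_rpow_const h1 (by positivity))
  rw [← laplace_eqOn_of_le hInt hW0 hφ hc (fun p hp => (hLW p hp).2) hp']
  refine setIntegral_mono_on ?_ hInt measurableSet_Ioi fun x hx => ?_
  · refine Integrable.bdd_mul (c := 1) hInt (by fun_prop) ?_
    refine (ae_restrict_iff' measurableSet_Ioi).2 (Filter.Eventually.of_forall fun x hx => ?_)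
    rw [Real.norm_eq_abs, Real.abs_exp, Real.exp_le_one_iff]
    exact neg_nonpos.2 (mul_nonneg hp'.le (le_of_lt hx))
  · refine mul_le_of_le_one_left (hW0 x hx) (Real.exp_le_one_iff.2 ?_)
    exact neg_nonpos.2 (mul_nonneg hp'.le (le_of_lt hx))

/-- For `α, μ ∈ (0,1]` and `λ₀ > 0`: for every `x > 0`,
`d/dx [E^μ_{α,1}(−λ₀ x^α)] = −λ₀ x^{α−1} Σ_{s=0}^∞ ((μ)_{s+1}/(s+1)!)(−λ₀x^α)^s/Γ(αs+α)`,
and the transition density kernel `W^{(μ)}_α(x) = −d/dx[E^μ_{α,1}(−λ₀x^α)]` is normalized: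
`∫_0^∞ W^{(μ)}_α(x) dx = 1`. -/
theorem prabhakar_transition_density (α μ lam₀ : ℝ)
    (hα : α ∈ Set.Ioc (0 : ℝ) 1) (hμ : μ ∈ Set.Ioc (0 : ℝ) 1) (hlam : 0 < lam₀) :
    (∀ x : ℝ, 0 < x →
      HasDerivAt (fun y : ℝ => prabhakar α 1 μ (-(lam₀ * y ^ α)))
        (-(lam₀ * x ^ (α - 1) * ∑' s : ℕ,
          ((ascPochhammer ℝ (s + 1)).eval μ / (((s + 1).factorial : ℝ))) *
            (-(lam₀ * x ^ α)) ^ s / Real.Gamma (α * s + α))) x) ∧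
    (∫ x in Set.Ioi (0 : ℝ), lam₀ * x ^ (α - 1) * ∑' s : ℕ,
        ((ascPochhammer ℝ (s + 1)).eval μ / (((s + 1).factorial : ℝ))) *
          (-(lam₀ * x ^ α)) ^ s / Real.Gamma (α * s + α)) = 1 := by
  exact ⟨fun x hx => hasDerivAt_prabhakar hα.1 hμ lam₀ hx, integral_prabhakarKernel hα hμ hlam⟩
end

section
/- For every μ ∈ (0,1) and every a > 0, the fractional power of a admits the Lévy–Khintchine representation ∫_0^∞ (1 − e^{−aτ}) τ^{−1−μ} dτ = −Γ(−μ) · a^μ, equivalently a^μ = (−1/Γ(−μ)) ∫_0^∞ (1 − e^{−aτ}) τ^{−1−μ} dτ, where −Γ(−μ) = Γ(1−μ)/μ > 0. -/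
open MeasureTheory

open Set Filter Topology

lemma one_sub_exp_neg_mul_mem_Icc {a τ : ℝ} (ha : 0 < a) (hτ : 0 < τ) :
    1 - Real.exp (-(a * τ)) ∈ Icc 0 (min 1 (a * τ)) := by
  have hexp : Real.exp (-(a * τ)) ≤ 1 := Real.exp_le_one_iff.mpr (by nlinarith)
  refine ⟨by linarith, le_min ?_ ?_⟩
  · linarith [Real.exp_pos (-(a * τ))]
  · linarith [Real.add_one_le_exp (-(a * τ))]

lemma integrableOn_one_sub_exp_neg_mul_mul_rpow {μ a : ℝ} (hμ : μ ∈ Ioo (0 : ℝ) 1) (ha : 0 < a) :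
    IntegrableOn (fun τ : ℝ => (1 - Real.exp (-(a * τ))) * τ ^ (-1 - μ)) (Ioi 0) := by
  have hmeas (s : Set ℝ) : AEStronglyMeasurable
      (fun τ : ℝ => (1 - Real.exp (-(a * τ))) * τ ^ (-1 - μ)) (volume.restrict s) := by
    fun_prop
  rw [← Ioc_union_Ioi_eq_Ioi (zero_le_one' ℝ)]
  refine IntegrableOn.union ?_ ?_
  · have hint : IntegrableOn (fun τ : ℝ => a * τ ^ (-μ)) (Ioc 0 1) :=
      ((intervalIntegrable_iff_integrableOn_Ioc_of_le zero_le_one).mp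
        (intervalIntegral.intervalIntegrable_rpow' (by linarith [hμ.2]))).const_mul a
    refine hint.mono' (hmeas _) ((ae_restrict_iff' measurableSet_Ioc).mpr (ae_of_all _ ?_))
    intro τ hτ
    obtain ⟨h0, h1⟩ := one_sub_exp_neg_mul_mem_Icc ha hτ.1
    have hpow : τ ^ (-μ) = τ * τ ^ (-1 - μ) := by
      rw [← Real.rpow_one_add' hτ.1.le (by linarith [hμ.1])]
      ring_nf
    have hp := Real.rpow_nonneg hτ.1.le (-1 - μ)
    rw [Real.norm_of_nonneg (mul_nonneg h0 hp), hpow, ← mul_assoc]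
    exact mul_le_mul_of_nonneg_right (h1.trans (min_le_right _ _)) hp
  · have hint : IntegrableOn (fun τ : ℝ => τ ^ (-1 - μ)) (Ioi 1) :=
      integrableOn_Ioi_rpow_of_lt (by linarith [hμ.1]) one_pos
    refine hint.mono' (hmeas _) ((ae_restrict_iff' measurableSet_Ioi).mpr (ae_of_all _ ?_))
    intro τ hτ
    have hτ0 : 0 < τ := one_pos.trans hτ
    obtain ⟨h0, h1⟩ := one_sub_exp_neg_mul_mem_Icc ha hτ0
    have hp := Real.rpow_nonneg hτ0.le (-1 - μ)
    rw [Real.norm_of_nonneg (mul_nonneg h0 hp)]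
    exact mul_le_of_le_one_left hp (h1.trans (min_le_left _ _))

lemma tendsto_one_sub_exp_neg_mul_mul_rpow_zero {μ a : ℝ} (hμ : μ < 1) (ha : 0 < a) :
    Tendsto (fun τ : ℝ => (1 - Real.exp (-(a * τ))) * τ ^ (-μ)) (𝓝[>] 0) (𝓝 0) := by
  have hlim : Tendsto (fun τ : ℝ => a * τ ^ (1 - μ)) (𝓝[>] 0) (𝓝 0) := by
    have hcont : ContinuousAt (fun τ : ℝ => a * τ ^ (1 - μ)) 0 :=
      (Real.continuousAt_rpow_const _ _ (Or.inr (by linarith))).const_mul a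
    simpa [Real.zero_rpow (by linarith : 1 - μ ≠ 0)] using
      hcont.tendsto.mono_left nhdsWithin_le_nhds
  refine squeeze_zero' ?_ ?_ hlim
  all_goals
    filter_upwards [self_mem_nhdsWithin] with τ hτ
    obtain ⟨h0, h1⟩ := one_sub_exp_neg_mul_mem_Icc ha hτ
    have hp := Real.rpow_nonneg (le_of_lt hτ) (-μ)
  · exact mul_nonneg h0 hp
  · rw [sub_eq_add_neg 1 μ, Real.rpow_add hτ, Real.rpow_one, ← mul_assoc]
    exact mul_le_mul_of_nonneg_right (h1.trans (min_le_right _ _)) hp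

lemma tendsto_one_sub_exp_neg_mul_mul_rpow_atTop {μ a : ℝ} (hμ : 0 < μ) (ha : 0 < a) :
    Tendsto (fun τ : ℝ => (1 - Real.exp (-(a * τ))) * τ ^ (-μ)) atTop (𝓝 0) := by
  refine squeeze_zero' ?_ ?_ (tendsto_rpow_neg_atTop hμ)
  all_goals
    filter_upwards [eventually_gt_atTop 0] with τ hτ
    obtain ⟨h0, h1⟩ := one_sub_exp_neg_mul_mem_Icc ha hτ
    have hp := Real.rpow_nonneg hτ.le (-μ)
  · exact mul_nonneg h0 hp
  · exact mul_le_of_le_one_left hp (h1.trans (min_le_left _ _))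

lemma integral_one_sub_exp_neg_mul_mul_rpow {μ a : ℝ} (hμ : μ ∈ Ioo (0 : ℝ) 1) (ha : 0 < a) :
    ∫ τ in Ioi (0 : ℝ), (1 - Real.exp (-(a * τ))) * τ ^ (-1 - μ) =
      Real.Gamma (1 - μ) / μ * a ^ μ := by
  have hμ0 : μ ≠ 0 := hμ.1.ne'
  have hGamma : ∫ τ in Ioi (0 : ℝ), τ ^ (-μ) * Real.exp (-(a * τ)) =
      (1 / a) ^ (1 - μ) * Real.Gamma (1 - μ) := by
    simpa using Real.integral_rpow_mul_exp_neg_mul_Ioi (sub_pos.mpr hμ.2) ha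
  have hint : IntegrableOn (fun τ : ℝ => τ ^ (-μ) * Real.exp (-(a * τ))) (Ioi 0) := by
    refine Integrable.of_integral_ne_zero ?_
    rw [hGamma]
    have := Real.Gamma_pos_of_pos (sub_pos.mpr hμ.2)
    positivity
  have hu (τ : ℝ) : HasDerivAt (fun τ : ℝ => 1 - Real.exp (-(a * τ)))
      (a * Real.exp (-(a * τ))) τ := by
    convert! (((hasDerivAt_id τ).const_mul a).neg.exp).const_sub 1 using 1
    simp [mul_comm]
  have hv : ∀ τ ∈ Ioi (0 : ℝ), HasDerivAt (fun τ : ℝ => τ ^ (-μ) * (-μ)⁻¹) (τ ^ (-1 - μ)) τ := by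
    intro τ hτ
    convert! (Real.hasDerivAt_rpow_const (p := -μ) (Or.inl (ne_of_gt hτ))).mul_const (-μ)⁻¹ using 1
    rw [show -μ - 1 = -1 - μ by ring]
    field_simp
  have hrew (τ : ℝ) : a * Real.exp (-(a * τ)) * (τ ^ (-μ) * (-μ)⁻¹) =
      a * (-μ)⁻¹ * (τ ^ (-μ) * Real.exp (-(a * τ))) := by ring
  have hparts := integral_Ioi_mul_deriv_eq_deriv_mul (a' := 0) (b' := 0) (fun τ _ => hu τ) hv
    (integrableOn_one_sub_exp_neg_mul_mul_rpow hμ ha)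
    (by
      simp only [Pi.mul_def, hrew]
      exact hint.const_mul _)
    (by simpa [Pi.mul_def, mul_assoc] using
      (tendsto_one_sub_exp_neg_mul_mul_rpow_zero hμ.2 ha).mul_const (-μ)⁻¹)
    (by simpa [Pi.mul_def, mul_assoc] using
      (tendsto_one_sub_exp_neg_mul_mul_rpow_atTop hμ.1 ha).mul_const (-μ)⁻¹)
  simp only [hrew] at hparts
  rw [hparts, integral_const_mul, hGamma, one_div, Real.inv_rpow ha.le, ← Real.rpow_neg ha.le,
    neg_sub, Real.rpow_sub_one ha.ne']
  field_simp
  ring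

/-- For `μ ∈ (0,1)` and `a > 0`, the Lévy–Khintchine representation of the fractional power:
`∫_0^∞ (1 − e^{−aτ}) τ^{−1−μ} dτ = −Γ(−μ)·a^μ`, where `−Γ(−μ) = Γ(1−μ)/μ > 0`. -/
theorem fractional_power_levy_khintchine (μ a : ℝ)
    (hμ : μ ∈ Set.Ioo (0 : ℝ) 1) (ha : 0 < a) :
    (∫ τ in Set.Ioi (0 : ℝ), (1 - Real.exp (-(a * τ))) * τ ^ (-1 - μ))
        = -Real.Gamma (-μ) * a ^ μ ∧
    -Real.Gamma (-μ) = Real.Gamma (1 - μ) / μ ∧ 0 < Real.Gamma (1 - μ) / μ := by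
  have hμ0 : μ ≠ 0 := hμ.1.ne'
  have hGamma : -Real.Gamma (-μ) = Real.Gamma (1 - μ) / μ := by
    rw [show 1 - μ = -μ + 1 by ring, Real.Gamma_add_one (neg_ne_zero.mpr hμ0)]
    field_simp
  refine ⟨?_, hGamma, div_pos (Real.Gamma_pos_of_pos (sub_pos.mpr hμ.2)) hμ.1⟩
  rw [hGamma, integral_one_sub_exp_neg_mul_mul_rpow hμ ha]
end
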